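/- Let f : ℝ → ℝ be a continuous, nondecreasing, convex function satisfying an exponential growth condition: there exist C ≥ 0 and a ≥ 0 with |f(y)| ≤ C·exp(a|y|) for all y. Let x ∈ ℝ, t > 0, μ ≤ ν real numbers, and 0 < σ ≤ ρ. Then ∫ f d(N(x + μt, σ²t)) ≤ ∫ f d(N(x + νt, ρ²t)), where N(m, s) denotes the Gaussian measure on ℝ with mean m and variance s. -/

import Mathlib

open MeasureTheory ProbabilityTheory

/-!
Write `N(m₂, v₂) = N(m₁, v₁) ∗ N(m₂ - m₁, v₂ - v₁)`. Jensen's inequality in the second factor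
gives `f (y + (m₂ - m₁)) ≤ ∫ f (y + z)` for almost every `y`, and monotonicity gives
`f y ≤ f (y + (m₂ - m₁))`; integrate over `y`. Integrability of `f` passes from the larger Gaussian
to the smaller one because a convex function has an affine minorant.
-/

open scoped NNReal

section Convex

variable {E : Type*} [NormedAddCommGroup E] [NormedSpace ℝ E] {f : E → ℝ}

lemma exists_affine_le_of_convexOn (hf : ConvexOn ℝ Set.univ f) (hf_lsc : LowerSemicontinuous f) :
    ∃ (l : E →L[ℝ] ℝ) (c : ℝ), ∀ y, l y + c ≤ f y := by
  obtain ⟨l, c, hle, -⟩ := hf.exists_affine_le_of_lt (𝕜 := ℝ) (Set.mem_univ 0) (sub_one_lt (f 0))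
    isClosed_univ (lowerSemicontinuousOn_univ_iff.2 hf_lsc)
  exact ⟨l, c, fun y ↦ hle ⟨y, Set.mem_univ y⟩⟩

lemma integrable_comp_of_convexOn_of_ae_le {Ω : Type*} {mΩ : MeasurableSpace Ω} {μ : Measure Ω}
    [IsFiniteMeasure μ] {X : Ω → E} {g : Ω → ℝ} (hf : ConvexOn ℝ Set.univ f)
    (hf_cont : Continuous f) (hX : Integrable X μ) (hg : Integrable g μ)
    (hfg : ∀ᵐ ω ∂μ, f (X ω) ≤ g ω) :
    Integrable (fun ω ↦ f (X ω)) μ := by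
  obtain ⟨l, c, hl⟩ := exists_affine_le_of_convexOn hf hf_cont.lowerSemicontinuous
  exact integrable_of_le_of_le (hf_cont.comp_aestronglyMeasurable hX.aestronglyMeasurable)
    (ae_of_all _ fun ω ↦ hl (X ω)) hfg ((l.integrable_comp hX).add (integrable_const c)) hg

end Convex

lemma integrable_integral_add_of_integrable_conv {M F : Type*} [AddMonoid M] [MeasurableSpace M]
    [MeasurableAdd₂ M] [NormedAddCommGroup F] [NormedSpace ℝ F] {μ ν : Measure M} [SFinite ν]
    {f : M → F} (hf : Integrable f (μ ∗ ν)) :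
    Integrable (fun x ↦ ∫ y, f (x + y) ∂ν) μ :=
  ((integrable_map_measure hf.aestronglyMeasurable (by fun_prop)).1 hf).integral_prod_left

section ConvexConv

variable {E : Type*} [NormedAddCommGroup E] [NormedSpace ℝ E] [CompleteSpace E]
  [MeasurableSpace E] [MeasurableAdd₂ E] {f : E → ℝ} {μ ν : Measure E} [IsProbabilityMeasure ν]

lemma ae_apply_add_integral_le_integral_add (hf : ConvexOn ℝ Set.univ f) (hf_cont : Continuous f)
    (hν : Integrable (fun z ↦ z) ν) (hf_int : Integrable f (μ ∗ ν)) :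
    ∀ᵐ y ∂μ, f (y + ∫ z, z ∂ν) ≤ ∫ z, f (y + z) ∂ν := by
  filter_upwards [((integrable_conv_iff hf_int.aestronglyMeasurable).1 hf_int).1] with y hy
  have hmean : ∫ z, (y + z) ∂ν = y + ∫ z, z ∂ν := by
    rw [integral_add (integrable_const y) hν, integral_const, probReal_univ, one_smul]
  rw [← hmean]
  exact hf.map_integral_le hf_cont.continuousOn isClosed_univ (ae_of_all _ fun _ ↦ Set.mem_univ _)
    ((integrable_const y).add hν) hy

variable [IsFiniteMeasure μ]

lemma integrable_comp_add_integral_of_integrable_conv (hf : ConvexOn ℝ Set.univ f)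
    (hf_cont : Continuous f) (hμ : Integrable (fun y ↦ y) μ) (hν : Integrable (fun z ↦ z) ν)
    (hf_int : Integrable f (μ ∗ ν)) :
    Integrable (fun y ↦ f (y + ∫ z, z ∂ν)) μ :=
  integrable_comp_of_convexOn_of_ae_le hf hf_cont (hμ.add (integrable_const _))
    (integrable_integral_add_of_integrable_conv hf_int)
    (ae_apply_add_integral_le_integral_add hf hf_cont hν hf_int)

lemma integral_comp_add_integral_le_integral_conv (hf : ConvexOn ℝ Set.univ f)
    (hf_cont : Continuous f) (hμ : Integrable (fun y ↦ y) μ) (hν : Integrable (fun z ↦ z) ν)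
    (hf_int : Integrable f (μ ∗ ν)) :
    ∫ y, f (y + ∫ z, z ∂ν) ∂μ ≤ ∫ y, f y ∂(μ ∗ ν) := by
  rw [integral_conv hf_int]
  exact integral_mono_ae
    (integrable_comp_add_integral_of_integrable_conv hf hf_cont hμ hν hf_int)
    (integrable_integral_add_of_integrable_conv hf_int)
    (ae_apply_add_integral_le_integral_add hf hf_cont hν hf_int)

end ConvexConv

section Gaussian

lemma integrable_id_gaussianReal (m : ℝ) (v : ℝ≥0) :
    Integrable (fun y ↦ y) (gaussianReal m v) :=
  (memLp_id_gaussianReal 1).integrable le_rfl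

lemma gaussianReal_conv_gaussianReal_sub (m₁ m₂ : ℝ) {v₁ v₂ : ℝ≥0} (hv : v₁ ≤ v₂) :
    gaussianReal m₁ v₁ ∗ gaussianReal (m₂ - m₁) (v₂ - v₁) = gaussianReal m₂ v₂ := by
  rw [gaussianReal_conv_gaussianReal, add_sub_cancel, add_tsub_cancel_of_le hv]

lemma integrable_gaussianReal_of_norm_le_exp {F : Type*} [NormedAddCommGroup F] {f : ℝ → F}
    {m : ℝ} {v : ℝ≥0} {C a : ℝ} (hf : AEStronglyMeasurable f (gaussianReal m v))
    (hf_growth : ∀ᵐ y ∂gaussianReal m v, ‖f y‖ ≤ C * Real.exp (a * |y|)) :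
    Integrable f (gaussianReal m v) := by
  have hexp : Integrable (fun y ↦ Real.exp (a * |y|)) (gaussianReal m v) :=
    integrable_exp_mul_abs (integrable_exp_mul_gaussianReal a)
      (integrable_exp_mul_gaussianReal (-a))
  exact (hexp.const_mul C).mono' hf hf_growth

end Gaussian

theorem gaussian_convex_comparison_with_drift_general {f : ℝ → ℝ} (hf_mono : Monotone f)
    (hf_conv : ConvexOn ℝ Set.univ f) {m₁ m₂ : ℝ} {v₁ v₂ : ℝ≥0} (hm : m₁ ≤ m₂) (hv : v₁ ≤ v₂)
    (hf_int : Integrable f (gaussianReal m₂ v₂)) :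
    ∫ y, f y ∂(gaussianReal m₁ v₁) ≤ ∫ y, f y ∂(gaussianReal m₂ v₂) := by
  have hf_cont : Continuous f := continuousOn_univ.1 (hf_conv.continuousOn isOpen_univ)
  rw [← gaussianReal_conv_gaussianReal_sub m₁ m₂ hv] at hf_int ⊢
  set P := gaussianReal m₁ v₁
  set Q := gaussianReal (m₂ - m₁) (v₂ - v₁)
  have hP : Integrable (fun y ↦ y) P := integrable_id_gaussianReal m₁ v₁
  have hQ : Integrable (fun z ↦ z) Q := integrable_id_gaussianReal _ _
  have hshift (y : ℝ) : f y ≤ f (y + ∫ z, z ∂Q) := by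
    rw [integral_id_gaussianReal]
    exact hf_mono (le_add_of_nonneg_right (sub_nonneg.2 hm))
  have hshift_int : Integrable (fun y ↦ f (y + ∫ z, z ∂Q)) P :=
    integrable_comp_add_integral_of_integrable_conv hf_conv hf_cont hP hQ hf_int
  have hf_int_P : Integrable f P :=
    integrable_comp_of_convexOn_of_ae_le hf_conv hf_cont hP hshift_int (ae_of_all _ hshift)
  calc ∫ y, f y ∂P
      ≤ ∫ y, f (y + ∫ z, z ∂Q) ∂P := integral_mono hf_int_P hshift_int hshift
    _ ≤ ∫ y, f y ∂(P ∗ Q) :=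
        integral_comp_add_integral_le_integral_conv hf_conv hf_cont hP hQ hf_int

/-- Constant-coefficient univariate comparison with drift: for a continuous, nondecreasing,
convex `f` of exponential growth, `μ ≤ ν` and `0 < σ ≤ ρ`, the Gaussian mean of `f` with
mean `x + μt` and variance `σ²t` is dominated by the one with mean `x + νt` and variance
`ρ²t`. -/
theorem gaussian_convex_comparison_with_drift
    (f : ℝ → ℝ) (hf_cont : Continuous f) (hf_mono : Monotone f)
    (hf_conv : ConvexOn ℝ Set.univ f)
    (C a : ℝ) (hC : 0 ≤ C) (ha : 0 ≤ a)
    (hf_growth : ∀ y : ℝ, |f y| ≤ C * Real.exp (a * |y|))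
    (x t μ ν σ ρ : ℝ) (ht : 0 < t) (hμν : μ ≤ ν) (hσ : 0 < σ) (hσρ : σ ≤ ρ) :
    ∫ y, f y ∂(gaussianReal (x + μ * t) (σ ^ 2 * t).toNNReal)
      ≤ ∫ y, f y ∂(gaussianReal (x + ν * t) (ρ ^ 2 * t).toNNReal) :=
  gaussian_convex_comparison_with_drift_general hf_mono hf_conv (by gcongr) (by gcongr)
    (integrable_gaussianReal_of_norm_le_exp hf_cont.aestronglyMeasurable (ae_of_all _ hf_growth))
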